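/- The three-dimensional elliptope E₃ = {x ∈ ℝ³ : the symmetric matrix with unit diagonal and off-diagonal entries x₁, x₂, x₃ (in positions (1,2), (1,3), (2,3)) is positive semidefinite} is affinely second-order cone representable: there exist a positive integer m, an affine subspace W of (ℝ³)ᵐ, and an affine map f : (ℝ³)ᵐ → ℝ³ such that E₃ = f(Qᵐ ∩ W). -/

import Mathlib

/-!
The elliptope is a slice of `{A ∈ S₊³ : A₁₁ = A₂₂}`, and a matrix in that cone is a sum of rank-one
matrices `v vᵀ` with `v₁² = v₂²`. Grouping these by `v₁ = v₂` and `v₁ = -v₂`, the cone is the sum of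
two copies of `S₊²`, each of which is a Lorentz cone up to a linear isomorphism.

Concretely, put `p = (1 + x₁)/2`, `s = (1 - x₁)/2`, `q = (x₂ + x₃)/2`, `t = (x₂ - x₃)/2`. In the
coordinates `X = v₁ + v₂`, `Z = v₁ - v₂`, `Y = v₃` the quadratic form of the matrix is
`p X² + 2 q X Y + Y² + 2 t Y Z + s Z²` (`elliptope_form`). It is nonnegative if and only if the
coefficient `1` of `Y²` splits as `r + u` with `p X² + 2 q X Y + r Y²` and `u Y² + 2 t Y Z + s Z²`
both nonnegative (`mem_elliptope_iff`). The witness is `r = q² / p`, the value that makes the first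
binary form degenerate. The Lorentz cone encodes nonnegativity of a binary form through
`(2q, p - r, p + r)`, so `m = 2` suffices.
-/

open Matrix

noncomputable section

/-- The three-dimensional Lorentz cone `Q = {x ∈ ℝ³ : x₃ ≥ √(x₁² + x₂²)}`. -/
def lorentzCone : Set (Fin 3 → ℝ) :=
  {x | Real.sqrt (x 0 ^ 2 + x 1 ^ 2) ≤ x 2}

/-- The `m`-fold Cartesian power `Qᵐ ⊆ (ℝ³)ᵐ` of the Lorentz cone. -/
def lorentzPow (m : ℕ) : Set (Fin m → Fin 3 → ℝ) :=
  {x | ∀ i, x i ∈ lorentzCone}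

/-- The cone of real symmetric positive semidefinite `k × k` matrices. -/
def psdCone (k : ℕ) : Set (Matrix (Fin k) (Fin k) ℝ) :=
  {A | A.PosSemidef}

/-- For `B ∈ Sᵏ`, the slice `S_B = {A ∈ S₊ᵏ : tr(AB) = 0}` of the psd cone
orthogonal to `B` w.r.t. the trace scalar product. -/
def sliceOrth (k : ℕ) (B : Matrix (Fin k) (Fin k) ℝ) : Set (Matrix (Fin k) (Fin k) ℝ) :=
  {A | A.PosSemidef ∧ Matrix.trace (A * B) = 0}

/-- `S` is a slice of `S₊ᵏ`: the intersection of the psd cone with a linear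
subspace of the space of symmetric matrices. -/
def IsSlice (k : ℕ) (S : Set (Matrix (Fin k) (Fin k) ℝ)) : Prop :=
  ∃ L : Submodule ℝ (Matrix (Fin k) (Fin k) ℝ),
    (∀ A ∈ L, A.IsSymm) ∧ S = psdCone k ∩ (L : Set (Matrix (Fin k) (Fin k) ℝ))

/-- A set `S` in a real vector space is second-order cone representable (socr)
if it is the image under a linear map of the intersection of `Qᵐ` with a
linear subspace of `(ℝ³)ᵐ`, for some positive integer `m`. -/
def IsSOCR {V : Type*} [AddCommGroup V] [Module ℝ V] (S : Set V) : Prop :=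
  ∃ m : ℕ, 0 < m ∧ ∃ W : Submodule ℝ (Fin m → Fin 3 → ℝ),
    ∃ f : (Fin m → Fin 3 → ℝ) →ₗ[ℝ] V,
      S = f '' (lorentzPow m ∩ (W : Set (Fin m → Fin 3 → ℝ)))

/-- A symmetric matrix is indefinite if it is neither positive semidefinite
nor negative semidefinite. -/
def Indefinite (k : ℕ) (B : Matrix (Fin k) (Fin k) ℝ) : Prop :=
  ¬ B.PosSemidef ∧ ¬ (-B).PosSemidef

/-- The three-dimensional elliptope. -/
def elliptope : Set (Fin 3 → ℝ) :=
  {x | (Matrix.of ![![1, x 0, x 1], ![x 0, 1, x 2], ![x 1, x 2, 1]]).PosSemidef}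

/-- The quadratic form of the elliptope matrix in the coordinates `v₁ + v₂`, `v₁ - v₂`, `v₃`. -/
lemma elliptope_form (x v : Fin 3 → ℝ) :
    v ⬝ᵥ (Matrix.of ![![1, x 0, x 1], ![x 0, 1, x 2], ![x 1, x 2, 1]]) *ᵥ v =
      (1 + x 0) / 2 * (v 0 + v 1) ^ 2 + 2 * ((x 1 + x 2) / 2) * (v 0 + v 1) * v 2 + v 2 ^ 2
        + 2 * ((x 1 - x 2) / 2) * v 2 * (v 0 - v 1) + (1 - x 0) / 2 * (v 0 - v 1) ^ 2 := by
  simp [Matrix.mulVec, dotProduct, Fin.sum_univ_three]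
  ring

lemma mem_elliptope_iff_form (x : Fin 3 → ℝ) :
    x ∈ elliptope ↔ ∀ X Y Z : ℝ,
      0 ≤ (1 + x 0) / 2 * X ^ 2 + 2 * ((x 1 + x 2) / 2) * X * Y + Y ^ 2
        + 2 * ((x 1 - x 2) / 2) * Y * Z + (1 - x 0) / 2 * Z ^ 2 := by
  constructor
  · intro h X Y Z
    have h' := h.dotProduct_mulVec_nonneg ![(X + Z) / 2, (X - Z) / 2, Y]
    rw [star_trivial, elliptope_form] at h'
    simp only [Matrix.cons_val] at h'
    exact h'.trans_eq (by ring)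
  · intro h
    refine Matrix.PosSemidef.of_dotProduct_mulVec_nonneg ?_ fun v => ?_
    · ext i j
      fin_cases i <;> fin_cases j <;> simp
    · rw [star_trivial, elliptope_form]
      exact h _ _ _

lemma sq_le_of_form_nonneg {a b c : ℝ} (h : ∀ X : ℝ, 0 ≤ a * X ^ 2 + 2 * b * X + c) :
    b ^ 2 ≤ a * c := by
  have h' : discrim a (2 * b) c ≤ 0 := discrim_le_zero fun X => by linarith [h X, sq X]
  unfold discrim at h'
  linarith

lemma form_nonneg {p q r : ℝ} (hp : 0 ≤ p) (hr : 0 ≤ r) (h : q ^ 2 ≤ p * r) (X Y : ℝ) :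
    0 ≤ p * X ^ 2 + 2 * q * X * Y + r * Y ^ 2 := by
  rcases hp.eq_or_lt with rfl | hp
  · have hq : q = 0 := by nlinarith
    subst hq
    simp only [zero_mul, mul_zero, zero_add]
    positivity
  · have h1 : 0 ≤ p * (p * X ^ 2 + 2 * q * X * Y + r * Y ^ 2) := by
      nlinarith [sq_nonneg (p * X + q * Y), mul_nonneg (sub_nonneg.2 h) (sq_nonneg Y)]
    exact nonneg_of_mul_nonneg_right h1 hp

/-- A point lies in the elliptope iff its matrix is a sum of two positive semidefinite matrices
supported on the planes `v₁ = v₂` and `v₁ = -v₂`. -/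
lemma mem_elliptope_iff (x : Fin 3 → ℝ) :
    x ∈ elliptope ↔ ∃ r u : ℝ, r + u = 1 ∧
      (0 ≤ (1 + x 0) / 2 ∧ 0 ≤ r ∧ ((x 1 + x 2) / 2) ^ 2 ≤ (1 + x 0) / 2 * r) ∧
      (0 ≤ (1 - x 0) / 2 ∧ 0 ≤ u ∧ ((x 1 - x 2) / 2) ^ 2 ≤ (1 - x 0) / 2 * u) := by
  rw [mem_elliptope_iff_form]
  generalize (1 + x 0) / 2 = p
  generalize (x 1 + x 2) / 2 = q
  generalize (x 1 - x 2) / 2 = t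
  generalize (1 - x 0) / 2 = s
  constructor
  · intro h
    have hp : 0 ≤ p := by simpa using h 1 0 0
    have hs : 0 ≤ s := by simpa using h 0 0 1
    have hqp : q ^ 2 ≤ p * 1 := sq_le_of_form_nonneg fun X => by
      have := h X 1 0
      linarith
    -- If `p = 0` then `q = 0`, so the junk value `q ^ 2 / 0 = 0` is the right choice of `r`.
    have hr : p * (q ^ 2 / p) = q ^ 2 := by
      rcases hp.eq_or_lt with rfl | hp
      · nlinarith
      · field_simp
    -- `X = -q / p` minimises the form over `X` at `Y = 1`.
    have hZ : ∀ Z : ℝ, 0 ≤ s * Z ^ 2 + 2 * t * Z + (1 - q ^ 2 / p) := fun Z => by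
      have h1 := h (-(q / p)) 1 Z
      have h2 : p * (-(q / p)) ^ 2 = q ^ 2 / p := by
        rcases eq_or_ne p 0 with rfl | hp
        · simp
        · field_simp
      have h3 : 2 * q * (-(q / p)) = -2 * (q ^ 2 / p) := by ring
      rw [h2, h3] at h1
      linarith
    refine ⟨q ^ 2 / p, 1 - q ^ 2 / p, by ring, ⟨hp, by positivity, hr.ge⟩, hs, ?_,
      sq_le_of_form_nonneg hZ⟩
    simpa using hZ 0
  · rintro ⟨r, u, hru, ⟨hp, hr, hq⟩, hs, hu, ht⟩ X Y Z
    obtain rfl : u = 1 - r := by linarith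
    linarith [form_nonneg hp hr hq X Y, form_nonneg hs hu ht Z Y]

/-- The Lorentz cone is the cone of positive semidefinite `2 × 2` matrices
`[[p, q], [q, r]]`, with `x = (2q, p - r, p + r)`. -/
lemma mem_lorentzCone_iff (x : Fin 3 → ℝ) :
    x ∈ lorentzCone ↔ 0 ≤ (x 2 + x 1) / 2 ∧ 0 ≤ (x 2 - x 1) / 2 ∧
      (x 0 / 2) ^ 2 ≤ (x 2 + x 1) / 2 * ((x 2 - x 1) / 2) := by
  change Real.sqrt (x 0 ^ 2 + x 1 ^ 2) ≤ x 2 ↔ _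
  rw [Real.sqrt_le_iff]
  constructor
  · rintro ⟨h0, h⟩
    have h1 : |x 1| ≤ x 2 := abs_le_of_sq_le_sq (by nlinarith [sq_nonneg (x 0)]) h0
    refine ⟨?_, ?_, ?_⟩
    · linarith [neg_abs_le (x 1)]
    · linarith [le_abs_self (x 1)]
    · linarith
  · rintro ⟨h1, h2, h3⟩
    exact ⟨by linarith, by linarith⟩

/-- The affine subspace of `(ℝ³)²` on which the two `2 × 2` matrices satisfy `p + s = 1` and
`r + u = 1`. -/
def elliptopeSubspace : AffineSubspace ℝ (Fin 2 → Fin 3 → ℝ) where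
  carrier := {y | y 0 2 + y 1 2 = 2 ∧ y 0 1 + y 1 1 = 0}
  smul_vsub_vadd_mem' := by
    rintro c a b d ⟨ha, ha2⟩ ⟨hb, hb2⟩ ⟨hd, hd2⟩
    simp only [Set.mem_ofPred_eq, vsub_eq_sub, vadd_eq_add, Pi.add_apply, Pi.smul_apply,
      Pi.sub_apply, smul_eq_mul]
    constructor
    · linear_combination c * ha - c * hb + hd
    · linear_combination c * ha2 - c * hb2 + hd2

/-- The projection `x = (p - s, q + t, q - t)`. -/
def elliptopeProj : (Fin 2 → Fin 3 → ℝ) →ₗ[ℝ] (Fin 3 → ℝ) where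
  toFun y := ![(y 0 2 + y 0 1 - y 1 2 - y 1 1) / 2, (y 0 0 + y 1 0) / 2, (y 0 0 - y 1 0) / 2]
  map_add' y z := by
    ext i
    fin_cases i <;> simp <;> ring
  map_smul' c y := by
    ext i
    fin_cases i <;> simp <;> ring

/-- The three-dimensional elliptope is affinely second-order cone
representable. -/
theorem elliptope_affinely_socr :
    ∃ m : ℕ, 0 < m ∧ ∃ W : AffineSubspace ℝ (Fin m → Fin 3 → ℝ),
      ∃ f : (Fin m → Fin 3 → ℝ) →ᵃ[ℝ] (Fin 3 → ℝ),
        elliptope = f '' (lorentzPow m ∩ (W : Set (Fin m → Fin 3 → ℝ))) := by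
  refine ⟨2, two_pos, elliptopeSubspace, elliptopeProj.toAffineMap, ?_⟩
  ext x
  constructor
  · intro hx
    obtain ⟨r, u, hru, h1, h2⟩ := (mem_elliptope_iff x).1 hx
    refine ⟨![![x 1 + x 2, (1 + x 0) / 2 - r, (1 + x 0) / 2 + r],
      ![x 1 - x 2, (1 - x 0) / 2 - u, (1 - x 0) / 2 + u]], ⟨?_, ?_, ?_⟩, ?_⟩
    · intro i
      rw [mem_lorentzCone_iff]
      fin_cases i
      · convert h1 using 3 <;> simp
      · convert h2 using 3 <;> simp
    · simp
      linarith
    · simp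
      linarith
    · ext i
      fin_cases i <;> simp [elliptopeProj] <;> linarith
  · rintro ⟨y, ⟨hy, hW, hW'⟩, rfl⟩
    rw [mem_elliptope_iff]
    have h0 := (mem_lorentzCone_iff _).1 (hy 0)
    have h1 := (mem_lorentzCone_iff _).1 (hy 1)
    refine ⟨(y 0 2 - y 0 1) / 2, (y 1 2 - y 1 1) / 2, by linarith, ?_, ?_⟩
    · have hp : (1 + elliptopeProj y 0) / 2 = (y 0 2 + y 0 1) / 2 := by
        simp [elliptopeProj]
        linarith
      have hq : (elliptopeProj y 1 + elliptopeProj y 2) / 2 = y 0 0 / 2 := by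
        simp [elliptopeProj]
        ring
      rw [LinearMap.coe_toAffineMap, hp, hq]
      exact h0
    · have hs : (1 - elliptopeProj y 0) / 2 = (y 1 2 + y 1 1) / 2 := by
        simp [elliptopeProj]
        linarith
      have ht : (elliptopeProj y 1 - elliptopeProj y 2) / 2 = y 1 0 / 2 := by
        simp [elliptopeProj]
        ring
      rw [LinearMap.coe_toAffineMap, hs, ht]
      exact h1
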